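/- Let n ≥ 2, k ≥ 1 and m ≥ 1 be natural numbers, and let f : ℝ^n → ℝ be continuously differentiable with support contained in [0,1]^n. Then there exists a function F : ℝ^n → ℝ realized by a ReLU network with at most (m+5)·⌈log₂(n·(2k+1))⌉ + 3 hidden layers, whose hidden-layer widths are at most 6n·(2k+1)^n (more precisely of the form: first hidden layer of width 3n(2k+1), second of width n(2k+1), then layers of width 6n(2k+1)^n, a layer of width (2k+1)^n, and output dimension 1), such that sup_{x ∈ [0,1]^n} |f(x) - F(x)| ≤ ‖f‖_∞ · 3^n · 2^{-m} · (2k+1) + (max_{j=1,…,n} ‖∂_{x_j} f‖_∞) · n/(2k), where ‖f‖_∞ = max{|f(x)| : x ∈ [0,1]^n} and ‖∂_{x_j} f‖_∞ is the supremum norm of the j-th partial derivative over ℝ^n. -/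

import Mathlib

/-- The ReLU function `σ(x) = max{x, 0}`. -/
noncomputable def relu (x : ℝ) : ℝ := max x 0

/-- `RealizedByReluNet n₀ ws F` means the scalar-valued function `F : ℝ^{n₀} → ℝ` is exactly
a ReLU network with hidden layers of widths given by the list `ws`:
`F = W_{L+1} ∘ σ ∘ W_L ∘ ⋯ ∘ σ ∘ W_1` with affine maps `W_i` (given by a matrix and a bias
vector) and the ReLU `σ` applied componentwise. -/
def RealizedByReluNet : (n0 : ℕ) → List ℕ → ((Fin n0 → ℝ) → ℝ) → Prop
  | n0, [], F => ∃ (a : Fin n0 → ℝ) (b : ℝ), ∀ x, F x = ∑ j, a j * x j + b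
  | n0, w :: ws, F => ∃ (A : Matrix (Fin w) (Fin n0) ℝ) (b : Fin w → ℝ)
      (G : (Fin w → ℝ) → ℝ), RealizedByReluNet w ws G ∧
      ∀ x, F x = G (fun i => relu (A.mulVec x i + b i))

/-!
On a grid of mesh `1 / N` the Courant hat functions of the Kuhn (Freudenthal) triangulation have
the closed form `σ(1 - σ(max_j d_j) - σ(max_j (-d_j)))`, where `d = N x - i` is the scaled
displacement from the node `i / N`. A tournament of pairwise maxima computes them exactly in
`⌈log₂ n⌉` layers, so no approximate multiplication is needed, and the network equals the piecewise
linear interpolant of `f`. The hat at `i` is the probability that `⌊N x_j + u⌋ = i_j` for all `j`,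
with `u` uniform in `[0, 1)`; hence the hats form a partition of unity, and the interpolant at `x`
averages `f` over nodes within distance `1 / N` of `x`.
-/

theorem relu_nonneg (x : ℝ) : 0 ≤ relu x := le_max_right _ _

theorem relu_of_nonneg {x : ℝ} (hx : 0 ≤ x) : relu x = x := max_eq_left hx

theorem max_eq_relu_sub_relu_add_relu (a b : ℝ) :
    max a b = relu a - relu (-a) + relu (b - a) := by
  simp only [relu, max_def]
  grind

universe u

theorem exists_surjective_sum_of_card_le_two_mul {J : Type u} [Fintype J] [Nonempty J]
    {c : ℕ} (hJ : Fintype.card J ≤ 2 * c) :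
    ∃ (I : Type u) (_ : Fintype I) (_ : Nonempty I) (e : I ⊕ I → J),
      Function.Surjective e ∧ Fintype.card I ≤ c ∧ Fintype.card I ≤ Fintype.card J := by
  have hpos : 0 < Fintype.card J := Fintype.card_pos
  let I := ULift.{u} (Fin ((Fintype.card J + 1) / 2))
  have hI : Fintype.card I = (Fintype.card J + 1) / 2 := by simp [I]
  obtain ⟨g⟩ : Nonempty (J ↪ I ⊕ I) :=
    Function.Embedding.nonempty_of_card_le (by rw [Fintype.card_sum]; omega)
  exact ⟨I, inferInstance, Fintype.card_pos_iff.1 (by omega), Function.invFun g,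
    Function.invFun_surjective g.injective, by omega, by omega⟩

theorem sup'_eq_sup'_max_of_surjective {I J : Type*} [Fintype I] [Nonempty I]
    [Fintype J] [Nonempty J] {e : I ⊕ I → J} (he : Function.Surjective e) (v : J → ℝ) :
    Finset.univ.sup' Finset.univ_nonempty v =
      Finset.univ.sup' Finset.univ_nonempty
        (fun i => max (v (e (Sum.inl i))) (v (e (Sum.inr i)))) := by
  refine eq_of_forall_ge_iff fun c => ?_
  simp only [Finset.sup'_le_iff, Finset.mem_univ, true_imp_iff, max_le_iff, forall_and,
    he.forall, Sum.forall]

/-- `F` can be computed by a ReLU network with hidden widths `ws` that reads its input through an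
arbitrary affine map. Allowing any such map makes the notion independent of a numbering of the
coordinates and stable under composition with affine maps. -/
def RealizedAfterAffine {ι : Type*} (ws : List ℕ) (F : (ι → ℝ) → ℝ) : Prop :=
  ∀ (n₀ : ℕ) (L : (Fin n₀ → ℝ) →ᵃ[ℝ] (ι → ℝ)), RealizedByReluNet n₀ ws (fun x => F (L x))

namespace RealizedAfterAffine

variable {ι κ : Type*} {ws : List ℕ} {w : ℕ}

theorem realizedByReluNet {n : ℕ} {F : (Fin n → ℝ) → ℝ} (hF : RealizedAfterAffine ws F) :
    RealizedByReluNet n ws F :=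
  hF n (AffineMap.id ℝ _)

theorem comp {F : (κ → ℝ) → ℝ} (hF : RealizedAfterAffine ws F) (M : (ι → ℝ) →ᵃ[ℝ] (κ → ℝ)) :
    RealizedAfterAffine ws (fun y => F (M y)) :=
  fun n₀ L => hF n₀ (M.comp L)

theorem of_affine (F : (ι → ℝ) →ᵃ[ℝ] ℝ) : RealizedAfterAffine [] F := by
  intro n₀ L
  refine ⟨fun j => (F.comp L).linear (fun i => if j = i then 1 else 0), F (L 0), fun x => ?_⟩
  calc F (L x) = (F.comp L).linear x + F (L 0) := congrFun (AffineMap.decomp (F.comp L)) x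
    _ = _ := by
      rw [LinearMap.pi_apply_eq_sum_univ (F.comp L).linear x]
      simp only [smul_eq_mul, mul_comm]

variable [Fintype κ]

theorem relu_layer {G : (κ → ℝ) → ℝ} (hG : RealizedAfterAffine ws G) (hw : Fintype.card κ ≤ w) :
    RealizedAfterAffine (w :: ws) (fun y => G (fun i => relu (y i))) := by
  intro n₀ L
  obtain ⟨e⟩ : Nonempty (κ ↪ Fin w) :=
    Function.Embedding.nonempty_of_card_le (by simpa using hw)
  let E := (Function.ExtendByZero.linearMap ℝ e).toAffineMap.comp L
  refine ⟨LinearMap.toMatrix' E.linear, E 0, fun z => G (fun i => z (e i)),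
    hG w (LinearMap.funLeft ℝ ℝ e).toAffineMap, fun x => ?_⟩
  refine congrArg G (funext fun i => congrArg relu ?_)
  calc L x i = E x (e i) := (e.injective.extend_apply (L x) 0 i).symm
    _ = _ := by
      rw [LinearMap.toMatrix'_mulVec]
      exact congrFun (congrFun (AffineMap.decomp E) x) (e i)

theorem max_layer {G : (κ → ℝ) → ℝ} (hG : RealizedAfterAffine ws G) (s t : κ → ι)
    (hw : 3 * Fintype.card κ ≤ w) :
    RealizedAfterAffine (w :: ws) (fun y => G (fun i => max (y (s i)) (y (t i)))) := by
  let coord (i : ι) : (ι → ℝ) →ₗ[ℝ] ℝ := LinearMap.proj i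
  let before : (ι → ℝ) →ₗ[ℝ] (κ ⊕ κ ⊕ κ → ℝ) :=
    LinearMap.pi (Sum.elim (fun i => coord (s i))
      (Sum.elim (fun i => -coord (s i)) (fun i => coord (t i) - coord (s i))))
  let after : (κ ⊕ κ ⊕ κ → ℝ) →ₗ[ℝ] (κ → ℝ) :=
    LinearMap.funLeft ℝ ℝ Sum.inl - LinearMap.funLeft ℝ ℝ (Sum.inr ∘ Sum.inl) +
      LinearMap.funLeft ℝ ℝ (Sum.inr ∘ Sum.inr)
  have hcard : Fintype.card (κ ⊕ κ ⊕ κ) ≤ w := by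
    simp only [Fintype.card_sum]
    omega
  simp only [max_eq_relu_sub_relu_add_relu]
  exact ((hG.comp after.toAffineMap).relu_layer hcard).comp before.toAffineMap

theorem sup'_layers {H : (κ → ℝ) → ℝ} (hH : RealizedAfterAffine ws H) {r : ℕ}
    {J : Type u} [Fintype J] [Nonempty J] (hr : Fintype.card J ≤ 2 ^ r)
    (hw : 3 * (Fintype.card κ * Fintype.card J) ≤ w) :
    RealizedAfterAffine (List.replicate r w ++ ws) (fun y : κ × J → ℝ =>
      H (fun a => Finset.univ.sup' Finset.univ_nonempty (fun j => y (a, j)))) := by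
  induction r generalizing J with
  | zero =>
    have : Subsingleton J := Fintype.card_le_one_iff_subsingleton.1 (by simpa using hr)
    obtain ⟨j₀⟩ := ‹Nonempty J›
    have hsup (v : J → ℝ) : Finset.univ.sup' Finset.univ_nonempty v = v j₀ := by
      refine eq_of_forall_ge_iff fun c => ?_
      simp [Subsingleton.elim _ j₀]
    simp only [hsup]
    exact hH.comp (LinearMap.funLeft ℝ ℝ (fun a => (a, j₀))).toAffineMap
  | succ r ih =>
    obtain ⟨I, _, _, e, he, hIr, hIJ⟩ :=
      exists_surjective_sum_of_card_le_two_mul (hr.trans_eq (pow_succ' 2 r))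
    have hI : 3 * (Fintype.card κ * Fintype.card I) ≤ w := hw.trans' (by gcongr)
    simp only [sup'_eq_sup'_max_of_surjective he]
    exact (ih hIr hI).max_layer (fun p : κ × I => (p.1, e (Sum.inl p.2)))
      (fun p => (p.1, e (Sum.inr p.2))) (by simpa using hI)

end RealizedAfterAffine

section KuhnHat

open MeasureTheory

variable {ι : Type*} [Fintype ι] [Nonempty ι]

/-- The Courant hat function of the Kuhn (Freudenthal) triangulation of the integer grid, as a
function of the displacement `d` from its node. -/
noncomputable def kuhnHat (d : ι → ℝ) : ℝ :=
  relu (1 - relu (Finset.univ.sup' Finset.univ_nonempty d) -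
    relu (Finset.univ.sup' Finset.univ_nonempty fun j => -d j))

theorem kuhnHat_nonneg (d : ι → ℝ) : 0 ≤ kuhnHat d := relu_nonneg _

theorem setOf_floor_add_eq_zero (d : ι → ℝ) :
    {u ∈ Set.Ico (0 : ℝ) 1 | ∀ j, ⌊d j + u⌋ = 0} =
      Set.Ico (relu (Finset.univ.sup' Finset.univ_nonempty fun j => -d j))
        (1 - relu (Finset.univ.sup' Finset.univ_nonempty d)) := by
  ext u
  simp only [Set.mem_ofPred_eq, Set.mem_Ico, Int.floor_eq_zero_iff, relu, max_le_iff,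
    lt_sub_comm (a := u), max_lt_iff, Finset.sup'_le_iff, Finset.sup'_lt_iff, Finset.mem_univ,
    true_imp_iff, forall_and]
  simp only [neg_le_iff_add_nonneg', lt_sub_iff_add_lt, zero_add]
  tauto

theorem kuhnHat_eq_volume (d : ι → ℝ) :
    kuhnHat d = volume.real {u ∈ Set.Ico (0 : ℝ) 1 | ∀ j, ⌊d j + u⌋ = 0} := by
  rw [setOf_floor_add_eq_zero, Real.volume_real_Ico]
  rfl

theorem abs_le_one_of_kuhnHat_ne_zero {d : ι → ℝ} (hd : kuhnHat d ≠ 0) (j : ι) : |d j| ≤ 1 := by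
  obtain ⟨u, ⟨hu0, hu1⟩, hu⟩ : {u ∈ Set.Ico (0 : ℝ) 1 | ∀ j, ⌊d j + u⌋ = 0}.Nonempty := by
    contrapose! hd
    rw [kuhnHat_eq_volume, hd, measureReal_empty]
  obtain ⟨h0, h1⟩ := Int.floor_eq_zero_iff.1 (hu j)
  rw [abs_le]
  constructor <;> linarith

theorem sum_kuhnHat_eq_one {v : ι → ℝ} {s : Finset (ι → ℤ)}
    (hs : ∀ u ∈ Set.Ico (0 : ℝ) 1, (fun j => ⌊v j + u⌋) ∈ s) :
    ∑ i ∈ s, kuhnHat (fun j => v j - i j) = 1 := by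
  let corner : ℝ → ι → ℤ := fun u j => ⌊v j + u⌋
  have hcorner : Measurable corner := by fun_prop
  have hhat (i : ι → ℤ) : kuhnHat (fun j => v j - i j) =
      (volume.restrict (Set.Ico (0 : ℝ) 1)).real (corner ⁻¹' {i}) := by
    rw [kuhnHat_eq_volume, measureReal_restrict_apply (hcorner (.singleton i))]
    congr 1
    ext u
    simp [corner, funext_iff, sub_add_eq_add_sub, sub_eq_zero, and_comm]
  calc ∑ i ∈ s, kuhnHat (fun j => v j - i j)
      = (volume.restrict (Set.Ico (0 : ℝ) 1)).real (corner ⁻¹' s) := by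
        simp only [hhat]
        exact sum_measureReal_preimage_singleton s fun i _ => hcorner (.singleton i)
    _ = volume.real (Set.Ico (0 : ℝ) 1) := by
        rw [measureReal_restrict_apply (hcorner s.measurableSet),
          Set.inter_eq_right.2 (show Set.Ico 0 1 ⊆ corner ⁻¹' s from hs)]
    _ = 1 := by simp

/-- The displacements `a x - p i` of the scaled point `a x` from the nodes `p i`, followed by their
negatives: the arguments of the two maxima in `kuhnHat`. -/
noncomputable def signedDisplacements {ι K : Type*} (a : ℝ) (p : K → ι → ℝ) :
    (ι → ℝ) →ᵃ[ℝ] ((K ⊕ K) × ι → ℝ) :=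
  let displacement (i : K) (j : ι) : (ι → ℝ) →ᵃ[ℝ] ℝ :=
    a • (LinearMap.proj j : (ι → ℝ) →ₗ[ℝ] ℝ).toAffineMap - AffineMap.const ℝ _ (p i j)
  AffineMap.pi fun q => Sum.elim (fun i => displacement i q.2) (fun i => -displacement i q.2) q.1

theorem realizedAfterAffine_sum_mul_kuhnHat {K : Type*} [Fintype K] (a : ℝ) (p : K → ι → ℝ)
    (c : K → ℝ) {r w : ℕ} (hr : Fintype.card ι ≤ 2 ^ r)
    (hw : 6 * Fintype.card ι * Fintype.card K ≤ w) :
    RealizedAfterAffine (List.replicate (r + 1) w ++ [Fintype.card K])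
      (fun x => ∑ i, c i * kuhnHat (fun j => a * x j - p i j)) := by
  let weightedSum : (K → ℝ) →ₗ[ℝ] ℝ := ∑ i, c i • LinearMap.proj i
  let hatArgument : (K ⊕ K → ℝ) →ᵃ[ℝ] (K → ℝ) :=
    AffineMap.const ℝ _ 1 - (LinearMap.funLeft ℝ ℝ Sum.inl).toAffineMap -
      (LinearMap.funLeft ℝ ℝ Sum.inr).toAffineMap
  have hmaxima : 3 * (Fintype.card (K ⊕ K) * Fintype.card ι) ≤ w := by
    rw [Fintype.card_sum]
    linarith
  have hpositiveParts : Fintype.card (K ⊕ K) ≤ w := by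
    have hι : 0 < Fintype.card ι := Fintype.card_pos
    nlinarith
  have houtput := (RealizedAfterAffine.of_affine weightedSum.toAffineMap).relu_layer le_rfl
  have hhatNet := (houtput.comp hatArgument).relu_layer hpositiveParts
  have hnet := (hhatNet.sup'_layers hr hmaxima).comp (signedDisplacements a p)
  have hsum (y : K → ℝ) : weightedSum.toAffineMap y = ∑ i, c i * y i := by simp [weightedSum]
  simp only [hsum] at hnet
  rw [List.replicate_succ', List.append_assoc]
  exact hnet

end KuhnHat

theorem abs_sub_sum_mul_le {I : Type*} {s : Finset I} {p φ : I → ℝ} {a ε : ℝ}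
    (hφ : ∀ i ∈ s, 0 ≤ φ i) (hsum : ∑ i ∈ s, φ i = 1)
    (hp : ∀ i ∈ s, φ i ≠ 0 → |a - p i| ≤ ε) : |a - ∑ i ∈ s, p i * φ i| ≤ ε := by
  calc |a - ∑ i ∈ s, p i * φ i| = |∑ i ∈ s, (a - p i) * φ i| := by
        simp only [sub_mul, Finset.sum_sub_distrib, ← Finset.mul_sum, hsum, mul_one]
    _ ≤ ∑ i ∈ s, |(a - p i) * φ i| := Finset.abs_sum_le_sum_abs _ _
    _ ≤ ∑ i ∈ s, ε * φ i := Finset.sum_le_sum fun i hi => by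
        rw [abs_mul, abs_of_nonneg (hφ i hi)]
        rcases eq_or_ne (φ i) 0 with h | h
        · simp [h]
        · exact mul_le_mul_of_nonneg_right (hp i hi h) (hφ i hi)
    _ = ε := by rw [← Finset.mul_sum, hsum, mul_one]

section KuhnInterpolant

variable {ι : Type*} [Fintype ι] [DecidableEq ι]

/-- The multi-indices `i` of the nodes `i / N` of the grid of mesh `1 / N` on the unit cube. -/
noncomputable def gridNodes (ι : Type*) [Fintype ι] [DecidableEq ι] (N : ℕ) : Finset (ι → ℤ) :=
  Finset.Icc 0 (fun _ => (N : ℤ))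

theorem card_gridNodes (N : ℕ) : (gridNodes ι N).card = (N + 1) ^ Fintype.card ι := by
  simp only [gridNodes, Pi.card_Icc, Pi.zero_apply, Int.card_Icc, sub_zero, Finset.prod_const,
    Finset.card_univ]
  rfl

theorem floor_mul_add_mem_gridNodes {N : ℕ} {x : ι → ℝ} (hx : x ∈ Set.Icc 0 1) {u : ℝ}
    (hu : u ∈ Set.Ico 0 1) : (fun j => ⌊N * x j + u⌋) ∈ gridNodes ι N := by
  refine Finset.mem_Icc.2 ⟨fun j => ?_, fun j => ?_⟩
  · have hxj : 0 ≤ x j := hx.1 j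
    have hu0 : 0 ≤ u := hu.1
    exact Int.floor_nonneg.2 (by positivity)
  · have : N * x j ≤ N := mul_le_of_le_one_right N.cast_nonneg (hx.2 j)
    exact Int.lt_add_one_iff.1 (Int.floor_lt.2 (by push_cast; linarith [hu.2]))

theorem div_mem_Icc_of_mem_gridNodes {N : ℕ} {i : ι → ℤ} (hi : i ∈ gridNodes ι N) :
    (fun j => (i j : ℝ) / N) ∈ Set.Icc (0 : ι → ℝ) 1 := by
  obtain ⟨h0, h1⟩ := Finset.mem_Icc.1 hi
  refine ⟨fun j => ?_, fun j => ?_⟩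
  · exact div_nonneg (Int.cast_nonneg (h0 j)) N.cast_nonneg
  · exact div_le_one_of_le₀ (Int.cast_le.2 (h1 j) |>.trans_eq (Int.cast_natCast N)) N.cast_nonneg

variable [Nonempty ι]

/-- The continuous function on the unit cube that is affine on each simplex of the Kuhn
triangulation of the grid of mesh `1 / N` and agrees with `f` at the nodes. -/
noncomputable def kuhnInterpolant (N : ℕ) (f : (ι → ℝ) → ℝ) (x : ι → ℝ) : ℝ :=
  ∑ i ∈ gridNodes ι N, f (fun j => i j / N) * kuhnHat (fun j => N * x j - i j)

theorem abs_sub_kuhnInterpolant_le {N : ℕ} (hN : 0 < N) {f : (ι → ℝ) → ℝ} {ε : ℝ}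
    (hf : ∀ x ∈ Set.Icc 0 1, ∀ y ∈ Set.Icc 0 1, ‖x - y‖ ≤ 1 / N → |f x - f y| ≤ ε)
    {x : ι → ℝ} (hx : x ∈ Set.Icc 0 1) : |f x - kuhnInterpolant N f x| ≤ ε := by
  refine abs_sub_sum_mul_le (fun i _ => kuhnHat_nonneg _)
    (sum_kuhnHat_eq_one fun u hu => floor_mul_add_mem_gridNodes hx hu) fun i hi hne =>
      hf x hx _ (div_mem_Icc_of_mem_gridNodes hi) ?_
  have hN' : (0 : ℝ) < N := by exact_mod_cast hN
  refine (pi_norm_le_iff_of_nonneg (by positivity)).2 fun j => ?_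
  calc ‖x j - i j / N‖ = |N * x j - i j| / N := by
        rw [Real.norm_eq_abs, ← abs_of_pos hN', ← abs_div, abs_of_pos hN']
        congr 1
        field_simp
    _ ≤ 1 / N := by
        gcongr
        exact abs_le_one_of_kuhnHat_ne_zero hne j

theorem realizedAfterAffine_kuhnInterpolant (N : ℕ) (f : (ι → ℝ) → ℝ) {r w : ℕ}
    (hr : Fintype.card ι ≤ 2 ^ r)
    (hw : 6 * Fintype.card ι * (N + 1) ^ Fintype.card ι ≤ w) :
    RealizedAfterAffine (List.replicate (r + 1) w ++ [(N + 1) ^ Fintype.card ι])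
      (kuhnInterpolant N f) := by
  have hcard : Fintype.card (gridNodes ι N) = (N + 1) ^ Fintype.card ι :=
    (Fintype.card_coe _).trans (card_gridNodes N)
  have hnet := realizedAfterAffine_sum_mul_kuhnHat N
    (fun (i : gridNodes ι N) j => (i.1 j : ℝ)) (fun i => f (fun j => i.1 j / N)) hr
    (w := w) (by rwa [hcard])
  rw [hcard] at hnet
  convert hnet using 2
  exact (Finset.sum_coe_sort (gridNodes ι N) _).symm

end KuhnInterpolant

theorem norm_le_sum_norm_apply_single {ι : Type*} [Fintype ι] [DecidableEq ι]
    (L : (ι → ℝ) →L[ℝ] ℝ) : ‖L‖ ≤ ∑ j, ‖L (Pi.single j 1)‖ := by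
  refine L.opNorm_le_bound (by positivity) fun v => ?_
  calc ‖L v‖ = ‖∑ j, v j • L (Pi.single j 1)‖ := by
        conv_lhs => rw [pi_eq_sum_univ' v, map_sum]
        simp
    _ ≤ ∑ j, ‖L (Pi.single j 1)‖ * ‖v‖ := norm_sum_le_of_le _ fun j _ => by
        rw [norm_smul, mul_comm]
        gcongr
        exact norm_le_pi_norm v j
    _ = _ := (Finset.sum_mul ..).symm

theorem abs_sub_le_of_abs_partialDeriv_le {ι : Type*} [Fintype ι] [DecidableEq ι]
    {f : (ι → ℝ) → ℝ} (hf : Differentiable ℝ f) {C : ℝ}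
    (hC : ∀ j x, |fderiv ℝ f x (Pi.single j 1)| ≤ C) {x y : ι → ℝ} {δ : ℝ} (hxy : ‖x - y‖ ≤ δ) :
    |f x - f y| ≤ Fintype.card ι * C * δ := by
  have hfderiv (z : ι → ℝ) : ‖fderiv ℝ f z‖ ≤ Fintype.card ι * C :=
    calc ‖fderiv ℝ f z‖ ≤ ∑ j, ‖fderiv ℝ f z (Pi.single j 1)‖ := norm_le_sum_norm_apply_single _
      _ ≤ ∑ _j : ι, C := Finset.sum_le_sum fun j _ => hC j z
      _ = Fintype.card ι * C := by simp
  calc |f x - f y| ≤ Fintype.card ι * C * ‖x - y‖ :=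
        convex_univ.norm_image_sub_le_of_norm_fderiv_le (𝕜 := ℝ) (fun z _ => hf z)
          (fun z _ => hfderiv z) (Set.mem_univ y) (Set.mem_univ x)
    _ ≤ Fintype.card ι * C * δ :=
        mul_le_mul_of_nonneg_left hxy ((norm_nonneg _).trans (hfderiv x))

theorem clog_add_one_le_two_mul_clog_mul {n b : ℕ} (hn : 2 ≤ n) (hb : 0 < b) :
    Nat.clog 2 n + 1 ≤ 2 * Nat.clog 2 (n * b) := by
  have hmono : Nat.clog 2 n ≤ Nat.clog 2 (n * b) :=
    Nat.clog_mono_right 2 (Nat.le_mul_of_pos_right n hb)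
  have hpos : 0 < Nat.clog 2 n := Nat.clog_pos one_lt_two hn
  omega

theorem deep_network_approximation_general {n N : ℕ} (hn : 0 < n) (hN : 0 < N)
    {f : (Fin n → ℝ) → ℝ} {ε : ℝ}
    (hf : ∀ x ∈ Set.Icc 0 1, ∀ y ∈ Set.Icc 0 1, ‖x - y‖ ≤ 1 / N → |f x - f y| ≤ ε) :
    ∃ F : (Fin n → ℝ) → ℝ,
      RealizedByReluNet n
        (3 * n * (N + 1) :: n * (N + 1) ::
          (List.replicate (Nat.clog 2 n + 1) (6 * n * (N + 1) ^ n) ++ [(N + 1) ^ n])) F ∧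
      ∀ x ∈ Set.Icc 0 1, |f x - F x| ≤ ε := by
  have : Nonempty (Fin n) := Fin.pos_iff_nonempty.1 hn
  have hnet := realizedAfterAffine_kuhnInterpolant N f (r := Nat.clog 2 n)
    (w := 6 * n * (N + 1) ^ n) (by simpa using Nat.le_pow_clog one_lt_two n) (by simp)
  rw [Fintype.card_fin] at hnet
  refine ⟨_, ((hnet.relu_layer (w := n * (N + 1)) (by rw [Fintype.card_fin]; nlinarith)).relu_layer
    (by rw [Fintype.card_fin]; nlinarith)).realizedByReluNet, fun x hx => ?_⟩
  have hrelu (j : Fin n) : relu (x j) = x j := relu_of_nonneg (hx.1 j)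
  simpa only [hrelu] using abs_sub_kuhnInterpolant_le hN hf hx

/-- **Theorem 2 (multi-dimensional case).** For `f ∈ C¹(ℝⁿ)` supported in `[0,1]ⁿ`,
with `B` a bound for `|f|` on `[0,1]ⁿ` (best such: `‖f‖_∞`) and `C` a bound for all
partial derivatives on `ℝⁿ` (best such: `max_j ‖∂ⱼf‖_∞`), there is a ReLU network `F` with
at most `(m+5)⌈log₂(n(2k+1))⌉ + 3` hidden layers — widths of the form
`3n(2k+1), n(2k+1), 6n(2k+1)ⁿ, …, 6n(2k+1)ⁿ, (2k+1)ⁿ`, all at most `6n(2k+1)ⁿ` — such that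
`sup_{x ∈ [0,1]ⁿ} |f(x) - F(x)| ≤ B·3ⁿ·2^{-m}·(2k+1) + C·n/(2k)`. -/
theorem deep_network_approximation (n k m : ℕ) (hn : 2 ≤ n) (hk : 1 ≤ k) (hm : 1 ≤ m)
    (f : (Fin n → ℝ) → ℝ) (hf : ContDiff ℝ 1 f)
    (hsupp : Function.support f ⊆ Set.Icc (fun _ => (0 : ℝ)) (fun _ => 1))
    (B C : ℝ)
    (hB : ∀ x ∈ Set.Icc (fun _ => (0 : ℝ)) (fun _ => 1), |f x| ≤ B)
    (hC : ∀ (j : Fin n) (x : Fin n → ℝ), |fderiv ℝ f x (Pi.single j 1)| ≤ C) :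
    ∃ (F : (Fin n → ℝ) → ℝ) (t : ℕ),
      t + 3 ≤ (m + 5) * Nat.clog 2 (n * (2 * k + 1)) + 3 ∧
      RealizedByReluNet n
        (3 * n * (2 * k + 1) :: n * (2 * k + 1) ::
          (List.replicate t (6 * n * (2 * k + 1) ^ n) ++ [(2 * k + 1) ^ n])) F ∧
      ∀ x ∈ Set.Icc (fun _ => (0 : ℝ)) (fun _ => 1),
        |f x - F x| ≤ B * 3 ^ n / 2 ^ m * (2 * k + 1) + C * n / (2 * k) := by
  obtain ⟨F, hF, hFε⟩ := deep_network_approximation_general (N := 2 * k) (by omega) (by omega)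
    fun x _ y _ => abs_sub_le_of_abs_partialDeriv_le (hf.differentiable one_ne_zero) hC
  have hdepth := clog_add_one_le_two_mul_clog_mul hn (Nat.succ_pos (2 * k))
  refine ⟨F, Nat.clog 2 n + 1, by nlinarith, hF, fun x hx => ?_⟩
  have hB0 : 0 ≤ B := (abs_nonneg _).trans (hB x hx)
  calc |f x - F x| ≤ C * n / (2 * k) := (hFε x hx).trans_eq (by simp; ring)
    _ ≤ B * 3 ^ n / 2 ^ m * (2 * k + 1) + C * n / (2 * k) :=
        le_add_of_nonneg_left (by positivity)
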